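/- (Bilinear de Leeuw lifting.) Let d > n ≥ 1 and m ∈ C_b(ℝ^{2n}) a bilinear multiplier from L^{p₁}(ℝⁿ)×L^{p₂}(ℝⁿ) to L^p(ℝⁿ) (1 ≤ p₁,p₂ < ∞, 1/p₁+1/p₂=1/p). Define m̃(ξ₁,η₁,ξ₂,η₂) := m(ξ₁,ξ₂) for ξ_j ∈ ℝⁿ, η_j ∈ ℝ^{d−n}. Then m̃ is a bilinear multiplier from L^{p₁}(ℝ^d)×L^{p₂}(ℝ^d) to L^p(ℝ^d) with ‖m̃‖_{BM(ℝ^d)} ≤ 𝔠·‖m‖_{BM(ℝⁿ)}, where 𝔠 = B_{p₁}B_{p₂}/A_p² if p < 1 and 𝔠 = 1 otherwise. -/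

import Mathlib

/-!
Write points of `ℝ^{n+k}` as `(x, y)`. Because the lifted symbol does not depend on the frequencies
dual to `y`, the lifted operator acts slice by slice: for almost every `y`,
`B_m̃(f, g)(·, y) = B_m(f(·, y), g(·, y))` (`lift_slice`). The slices are admissible inputs for `m`
because almost every slice of a function with integrable Fourier transform again has an integrable
Fourier transform, which is a partial inverse transform of the full one (`slice_sl1`); this rests
on almost everywhere Fourier inversion (`fourier_inv_ae`). Bounding each slice with a constant
admissible for `m` and integrating in `y` by Hölder's inequality, valid for every `p > 0` since
`p / p₁ + p / p₂ = 1`, shows that the same constant is admissible for the lift (`lift_mem`). The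
multiplier norm therefore does not increase at all.

What remains is `1 ≤ 𝔠` (`one_le_cc`). For `p < 1` this is `0 < A_p ≤ 1 ≤ B_q`. The comparisons
with `1` come from a single Rademacher function, but they require Khintchine's inequalities: some
upper constant exists, and the best lower constant is not `0`. Both follow from the
subgaussian bound `∫ exp (∑ α_j r_j) ≤ exp (∑ α_j² / 2)` (`radSum_exp`) and the second moment
(`radSum_lin_sq`).
-/

open MeasureTheory Filter Topology
open scoped ENNReal
noncomputable section

/-- The character `e^{2πi ξ·x}` on `ℝ^ι`. -/
noncomputable def rch {ι : Type} [Fintype ι] (ξ x : ι → ℝ) : ℂ :=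
  Complex.exp (2 * Real.pi * Complex.I * ((∑ i, ξ i * x i : ℝ) : ℂ))

/-- The Fourier transform on `ℝ^ι`. -/
noncomputable def rft {ι : Type} [Fintype ι] (f : (ι → ℝ) → ℂ) (ξ : ι → ℝ) : ℂ :=
  ∫ x : ι → ℝ, (starRingEnd ℂ) (rch ξ x) * f x

/-- The bilinear multiplier operator on `ℝ^ι`. -/
noncomputable def rBm {ι : Type} [Fintype ι] (m : (ι → ℝ) → (ι → ℝ) → ℂ)
    (f g : (ι → ℝ) → ℂ) (x : ι → ℝ) : ℂ :=
  ∫ ξ : ι → ℝ, ∫ η : ι → ℝ, rft f ξ * rft g η * m ξ η * rch (ξ + η) x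

/-- `f ∈ SL¹(ℝ^ι)`. -/
def rSL1 {ι : Type} [Fintype ι] (f : (ι → ℝ) → ℂ) : Prop :=
  Integrable f ∧ Integrable (rft f)

/-- The `(L^{p₁}, L^{p₂}, L^p)` bilinear multiplier norm on `ℝ^ι`. -/
noncomputable def rBMnorm (ι : Type) [Fintype ι] (p₁ p₂ p : ℝ)
    (m : (ι → ℝ) → (ι → ℝ) → ℂ) : ℝ≥0∞ :=
  sInf {C | ∀ f g : (ι → ℝ) → ℂ, rSL1 f → rSL1 g →
    eLpNorm (rBm m f g) (ENNReal.ofReal p) volume ≤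
      C * eLpNorm f (ENNReal.ofReal p₁) volume * eLpNorm g (ENNReal.ofReal p₂) volume}
/-- The Rademacher system on `[0,1]`. -/
noncomputable def rademacher (j : ℕ) (t : ℝ) : ℝ := (-1 : ℝ) ^ (⌊t * 2 ^ (j + 1)⌋ : ℤ)

/-- The best constant `A_q` in Khintchine's inequality
`A_q (∑ |α_j|²)^{1/2} ≤ ‖∑ α_j r_j‖_{L^q[0,1]}`. -/
noncomputable def khintchineA (q : ℝ) : ℝ :=
  sSup {A : ℝ | 0 ≤ A ∧ ∀ (N : ℕ) (α : Fin N → ℝ),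
    A * (∑ j, α j ^ 2) ^ (1/2 : ℝ) ≤
      (∫ t in (0:ℝ)..1, |∑ j, α j * rademacher j t| ^ q) ^ (1/q)}

/-- The best constant `B_q` in Khintchine's inequality
`‖∑ α_j r_j‖_{L^q[0,1]} ≤ B_q (∑ |α_j|²)^{1/2}`. -/
noncomputable def khintchineB (q : ℝ) : ℝ :=
  sInf {B : ℝ | 0 ≤ B ∧ ∀ (N : ℕ) (α : Fin N → ℝ),
    (∫ t in (0:ℝ)..1, |∑ j, α j * rademacher j t| ^ q) ^ (1/q) ≤
      B * (∑ j, α j ^ 2) ^ (1/2 : ℝ)}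

/-- The constant `𝔠 = B_{p₁}B_{p₂}/A_p²` if `p < 1`, and `𝔠 = 1` otherwise. -/
noncomputable def cc (p p₁ p₂ : ℝ) : ℝ :=
  if p < 1 then khintchineB p₁ * khintchineB p₂ / (khintchineA p) ^ 2 else 1

/-! ### Fourier inversion for integrable functions with integrable transform -/

open scoped FourierTransform SchwartzMap ContDiff in
/-- Fourier inversion almost everywhere, with no continuity assumption on `f`: both sides are
tested against smooth compactly supported functions, for which inversion is known. -/
theorem fourier_inv_ae {V : Type*} [NormedAddCommGroup V] [InnerProductSpace ℝ V]
    [FiniteDimensional ℝ V] [MeasurableSpace V] [BorelSpace V] {f : V → ℂ}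
    (hf : Integrable f) (hF : Integrable (𝓕 f)) : ∀ᵐ x, f x = 𝓕⁻ (𝓕 f) x := by
  have flip : ∀ u v : V → ℂ, Integrable u → Integrable v →
      ∫ x, 𝓕 u x * v x = ∫ x, u x * 𝓕 v x := fun u v hu hv => by
    simpa using! (VectorFourier.integral_fourierIntegral_smul_eq_flip (L := innerₗ V)
      Real.continuous_fourierChar continuous_inner hu hv)
  have hc : Continuous (𝓕⁻ (𝓕 f)) := by
    rw [Real.fourierInv_eq_fourier_comp_neg]
    exact VectorFourier.fourierIntegral_continuous Real.continuous_fourierChar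
      (by exact continuous_inner) hF.comp_neg
  refine ae_eq_of_integral_contDiff_smul_eq hf.locallyIntegrable hc.locallyIntegrable ?_
  intro g hg hs
  have hsC : HasCompactSupport (fun x => (g x : ℂ)) := hs.comp_left (g := fun r : ℝ => (r : ℂ)) (by simp)
  let φ : 𝓢(V, ℂ) := hsC.toSchwartzMap (Complex.ofRealCLM.contDiff.comp hg)
  have hφ : ∀ x, φ x = (g x : ℂ) := fun x => rfl
  have e1 : 𝓕 (𝓕⁻ (φ : V → ℂ)) = φ := by
    rw [← SchwartzMap.fourierInv_coe, ← SchwartzMap.fourier_coe, FourierTransform.fourier_fourierInv_eq]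
  have hI : Integrable (𝓕⁻ (φ : V → ℂ)) := by
    rw [← SchwartzMap.fourierInv_coe]; exact SchwartzMap.integrable _
  -- test against `𝓕 (𝓕⁻ φ) = φ` for `f`, and against `φ` for the inverse transform of `𝓕 f`
  have a1 := flip _ f hI hf
  rw [e1] at a1
  have a2 := flip φ (fun x => 𝓕 f (-x)) φ.integrable hF.comp_neg
  rw [← integral_neg_eq_self] at a2
  simp only [neg_neg] at a2
  rw [← Real.fourierInv_eq_fourier_comp_neg] at a2
  simp only [← Real.fourierInv_eq_fourier_neg] at a2
  simp only [Complex.real_smul, ← hφ]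
  rw [a1, ← a2]

theorem rch_cont {ι : Type} [Fintype ι] :
    Continuous fun z : (ι → ℝ) × (ι → ℝ) => rch z.1 z.2 := by
  unfold rch
  fun_prop

theorem rch_norm {ι : Type} [Fintype ι] (ξ x : ι → ℝ) : ‖rch ξ x‖ = 1 := by
  unfold rch
  rw [mul_right_comm, ← Complex.ofReal_ofNat, ← Complex.ofReal_mul, ← Complex.ofReal_mul]
  exact Complex.norm_exp_ofReal_mul_I _

theorem rch_conj {ι : Type} [Fintype ι] (ξ x : ι → ℝ) :
    (starRingEnd ℂ) (rch ξ x) = rch ξ (-x) := by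
  unfold rch
  rw [← Complex.exp_conj]
  simp [map_ofNat]

theorem rch_neg_neg {ι : Type} [Fintype ι] (ξ x : ι → ℝ) : rch (-ξ) (-x) = rch ξ x := by
  simp [rch]

theorem rch_comm {ι : Type} [Fintype ι] (ξ x : ι → ℝ) : rch ξ x = rch x ξ := by
  simp [rch, mul_comm]

theorem rch_add {ι : Type} [Fintype ι] (ξ η x : ι → ℝ) :
    rch (ξ + η) x = rch ξ x * rch η x := by
  unfold rch
  rw [← Complex.exp_add]
  simp [add_mul, Finset.sum_add_distrib, mul_add]

theorem rch_elim {ι κ : Type} [Fintype ι] [Fintype κ] (ξ x : ι → ℝ) (η y : κ → ℝ) :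
    rch (Sum.elim ξ η) (Sum.elim x y) = rch ξ x * rch η y := by
  unfold rch
  rw [← Complex.exp_add]
  simp [mul_add]

open scoped FourierTransform in
theorem rft_eq_fourier {ι : Type} [Fintype ι] (f : (ι → ℝ) → ℂ) (ξ : ι → ℝ) :
    rft f ξ = 𝓕 (fun x : EuclideanSpace ℝ ι => f x.ofLp) (WithLp.toLp 2 ξ) := by
  rw [Real.fourier_eq']
  unfold rft
  rw [← (PiLp.volume_preserving_ofLp ι).integral_comp
    (MeasurableEquiv.toLp 2 (ι → ℝ)).symm.measurableEmbedding]
  congr 1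
  ext x
  rw [smul_eq_mul]
  congr 1
  unfold rch
  rw [← Complex.exp_conj]
  congr 1
  simp only [map_mul, map_ofNat, Complex.conj_I, Complex.conj_ofReal, PiLp.inner_apply,
    RCLike.inner_apply, conj_trivial]
  push_cast
  ring

theorem rft_inv {ι : Type} [Fintype ι] {f : (ι → ℝ) → ℂ} (hf : Integrable f)
    (hF : Integrable (rft f)) : ∀ᵐ x, f x = ∫ ξ, rch ξ x * rft f ξ := by
  have me := (MeasurableEquiv.toLp 2 (ι → ℝ)).symm.measurableEmbedding
  have me' := (MeasurableEquiv.toLp 2 (ι → ℝ)).measurableEmbedding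
  have mp := PiLp.volume_preserving_ofLp ι
  have h1 : Integrable fun x : EuclideanSpace ℝ ι => f x.ofLp :=
    (mp.integrable_comp_emb me).2 hf
  have h2 : Integrable (FourierTransform.fourier fun x : EuclideanSpace ℝ ι => f x.ofLp) := by
    rw [← ((PiLp.volume_preserving_toLp ι).integrable_comp_emb me')]
    refine hF.congr (Eventually.of_forall fun ξ => ?_)
    simp [rft_eq_fourier]
  have h3 := fourier_inv_ae h1 h2
  have h4 := (PiLp.volume_preserving_toLp ι).quasiMeasurePreserving.ae h3
  filter_upwards [h4] with x hx
  rw [show f x = _ from hx, Real.fourierInv_eq',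
    ← (PiLp.volume_preserving_toLp ι).integral_comp me']
  congr 1
  ext ξ
  rw [smul_eq_mul, rft_eq_fourier]
  congr 1
  unfold rch
  congr 1
  simp [PiLp.inner_apply, mul_comm, mul_left_comm, Finset.mul_sum]

/-- Fourier inversion with the inverse transform taken first. -/
theorem rft_inv' {ι : Type} [Fintype ι] {h : (ι → ℝ) → ℂ} (hh : Integrable h)
    (hF : Integrable fun x => ∫ ξ, rch ξ x * h ξ) :
    ∀ᵐ ξ, rft (fun x => ∫ ξ, rch ξ x * h ξ) ξ = h ξ := by
  have e : ∀ x, (∫ ξ, rch ξ x * h ξ) = rft h (-x) := by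
    intro x
    unfold rft
    simp only [rch_conj, rch_neg_neg]
    simp only [rch_comm]
  simp only [e] at hF ⊢
  have hF' : Integrable (rft h) := by simpa using hF.comp_neg
  filter_upwards [rft_inv hh hF'] with ξ hξ
  rw [hξ]
  rw [rft, ← integral_neg_eq_self]
  simp only [neg_neg, rch_conj]
  simp only [rch_comm]

/-! ### Khintchine's inequalities -/

/-- The Rademacher sum `∑ α_j r_j`. -/
def radSum {N : ℕ} (α : Fin N → ℝ) (t : ℝ) : ℝ := ∑ j, α j * rademacher j t

theorem rademacher_meas (j : ℕ) : Measurable (rademacher j) := by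
  have : Measurable fun z : ℤ => (-1 : ℝ) ^ z := measurable_from_top
  exact this.comp (Int.measurable_floor.comp (measurable_id.mul_const _))

theorem rademacher_abs (j : ℕ) (t : ℝ) : |rademacher j t| = 1 := by
  simp [rademacher, abs_zpow]

theorem rademacher_succ (j : ℕ) (t : ℝ) : rademacher (j + 1) t = rademacher j (2 * t) := by
  unfold rademacher
  congr 2
  ring

theorem rademacher_add_one (j : ℕ) (t : ℝ) : rademacher j (t + 1) = rademacher j t := by
  unfold rademacher
  have : (t + 1) * 2 ^ (j + 1) = t * 2 ^ (j + 1) + ((2 ^ (j + 1) : ℤ) : ℝ) := by push_cast; ring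
  rw [this, Int.floor_add_intCast, zpow_add₀ (by norm_num)]
  have : (-1 : ℝ) ^ ((2 : ℤ) ^ (j + 1)) = 1 :=
    Even.neg_one_zpow (even_two.pow_of_ne_zero (by omega))
  rw [this, mul_one]

theorem rademacher_zero_left {t : ℝ} (h0 : 0 ≤ t) (h1 : t < 1 / 2) : rademacher 0 t = 1 := by
  have : ⌊t * 2 ^ (0 + 1)⌋ = 0 := by rw [Int.floor_eq_iff]; constructor <;> norm_num <;> linarith
  rw [rademacher, this]; simp

theorem rademacher_zero_right {t : ℝ} (h0 : 1 / 2 ≤ t) (h1 : t < 1) : rademacher 0 t = -1 := by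
  have : ⌊t * 2 ^ (0 + 1)⌋ = 1 := by rw [Int.floor_eq_iff]; constructor <;> norm_num <;> linarith
  rw [rademacher, this]; simp

theorem radSum_meas {N : ℕ} (α : Fin N → ℝ) : Measurable (radSum α) := by
  unfold radSum
  exact Finset.measurable_fun_sum _ fun j _ => (rademacher_meas j).const_mul _

theorem radSum_bound {N : ℕ} (α : Fin N → ℝ) (t : ℝ) : |radSum α t| ≤ ∑ j, |α j| := by
  unfold radSum
  refine (Finset.abs_sum_le_sum_abs _ _).trans (Finset.sum_le_sum fun j _ => ?_)
  rw [abs_mul, rademacher_abs, mul_one]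

theorem radSum_intble {N : ℕ} (α : Fin N → ℝ) {φ : ℝ → ℝ} (hφ : Continuous φ) (a b : ℝ) :
    IntervalIntegrable (fun t => φ (radSum α t)) volume a b := by
  obtain ⟨C, hC⟩ := (isCompact_Icc (a := -∑ j, |α j|) (b := ∑ j, |α j|)).exists_bound_of_continuousOn
    hφ.continuousOn
  refine IntervalIntegrable.mono_fun' (g := fun _ => C) intervalIntegrable_const
    (hφ.measurable.comp (radSum_meas α)).aestronglyMeasurable ?_
  exact Eventually.of_forall fun t => hC _ (abs_le.1 (radSum_bound α t))

/-- The first Rademacher function is independent of the later ones: it is `±1` on the two halves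
of `[0,1]`, and the later ones restrict on each half to a rescaled copy of the whole system. -/
theorem radSum_cons {N : ℕ} (a : ℝ) (α : Fin N → ℝ) {φ : ℝ → ℝ} (hφ : Continuous φ) :
    ∫ t in (0:ℝ)..1, φ (radSum (Fin.cons a α : Fin (N + 1) → ℝ) t) =
      ((∫ t in (0:ℝ)..1, φ (a + radSum α t)) + ∫ t in (0:ℝ)..1, φ (-a + radSum α t)) / 2 := by
  have key : ∀ t, radSum (Fin.cons a α : Fin (N + 1) → ℝ) t =
      a * rademacher 0 t + radSum α (2 * t) := by
    intro t
    simp [radSum, Fin.sum_univ_succ, rademacher_succ]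
  have per : ∀ t, radSum α (t + 1) = radSum α t := fun t => by
    simp [radSum, rademacher_add_one]
  rw [← intervalIntegral.integral_add_adjacent_intervals (b := 1 / 2)
    (radSum_intble _ hφ _ _) (radSum_intble _ hφ _ _)]
  have e1 : ∫ t in (0:ℝ)..(1/2), φ (radSum (Fin.cons a α : Fin (N + 1) → ℝ) t) =
      ∫ t in (0:ℝ)..(1/2), φ (a + radSum α (2 * t)) := by
    refine intervalIntegral.integral_congr_Ioo_of_le (by norm_num) ?_
    intro t ht
    simp only [key, rademacher_zero_left ht.1.le ht.2, mul_one]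
  have e2 : ∫ t in (1/2:ℝ)..1, φ (radSum (Fin.cons a α : Fin (N + 1) → ℝ) t) =
      ∫ t in (1/2:ℝ)..1, φ (-a + radSum α (2 * t)) := by
    refine intervalIntegral.integral_congr_Ioo_of_le (by norm_num) ?_
    intro t ht
    simp only [key, rademacher_zero_right ht.1.le ht.2, mul_neg_one]
  rw [e1, e2, intervalIntegral.integral_comp_mul_left (fun t => φ (a + radSum α t)) two_ne_zero,
    intervalIntegral.integral_comp_mul_left (fun t => φ (-a + radSum α t)) two_ne_zero]
  have e3 : ∫ t in (2 * (1/2):ℝ)..(2 * 1), φ (-a + radSum α t) =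
      ∫ t in (0:ℝ)..1, φ (-a + radSum α t) := by
    rw [← sub_add_cancel (2 * (1/2) : ℝ) 1, ← sub_add_cancel (2 * 1 : ℝ) 1,
      ← intervalIntegral.integral_comp_add_right]
    simp only [per]
    norm_num
  rw [e3]
  norm_num
  ring

/-- The subgaussian bound, from `cosh a ≤ exp (a ^ 2 / 2)`. -/
theorem radSum_exp {N : ℕ} (α : Fin N → ℝ) :
    ∫ t in (0:ℝ)..1, Real.exp (radSum α t) ≤ Real.exp ((∑ j, α j ^ 2) / 2) := by
  induction N with
  | zero => simp [radSum]
  | succ N ih =>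
    rw [← Fin.cons_self_tail α, radSum_cons _ _ Real.continuous_exp]
    simp only [Real.exp_add, intervalIntegral.integral_const_mul]
    rw [← add_mul, mul_div_right_comm, ← Real.cosh_eq, Fin.sum_univ_succ, add_div, Real.exp_add]
    simp only [Fin.cons_zero, Fin.cons_succ]
    refine mul_le_mul (Real.cosh_le_exp_half_sq _) (ih _) ?_ (Real.exp_pos _).le
    exact intervalIntegral.integral_nonneg (by norm_num) fun t _ => (Real.exp_pos _).le

theorem radSum_lin_sq {N : ℕ} (α : Fin N → ℝ) :
    (∫ t in (0:ℝ)..1, radSum α t = 0) ∧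
    ∫ t in (0:ℝ)..1, radSum α t ^ 2 = ∑ j, α j ^ 2 := by
  induction N with
  | zero => simp [radSum]
  | succ N ih =>
    obtain ⟨i1, i2⟩ := ih (Fin.tail α)
    have I1 := radSum_intble (Fin.tail α) continuous_id 0 1
    have I2 := radSum_intble (Fin.tail α) (continuous_pow 2) 0 1
    simp only [id] at I1
    rw [← Fin.cons_self_tail α]
    constructor
    · have := radSum_cons (α 0) (Fin.tail α) continuous_id
      simp only [id] at this
      rw [this, intervalIntegral.integral_add (by simp) I1,
        intervalIntegral.integral_add (by simp) I1, i1]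
      simp
    · have hs : ∀ a : ℝ, ∫ t in (0:ℝ)..1, (a + radSum (Fin.tail α) t) ^ 2 =
          a ^ 2 + ∑ j, Fin.tail α j ^ 2 := by
        intro a
        have : ∀ t, (a + radSum (Fin.tail α) t) ^ 2 = a ^ 2 + (2 * a) * radSum (Fin.tail α) t +
          radSum (Fin.tail α) t ^ 2 := fun t => by ring
        simp only [this]
        rw [intervalIntegral.integral_add ((by simp : IntervalIntegrable _ _ _ _).add (I1.const_mul _)) I2,
          intervalIntegral.integral_add (by simp) (I1.const_mul _),
          intervalIntegral.integral_const_mul, i1, i2]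
        simp
      rw [radSum_cons (α 0) (Fin.tail α) (continuous_pow 2), hs, hs, Fin.sum_univ_succ]
      simp [Fin.tail]

/-- Every moment of a normalised Rademacher sum is bounded by an absolute constant, since
`|x| ^ q` is dominated by a multiple of `exp x + exp (-x)`. -/
theorem radSum_moment {q : ℝ} (hq : 0 < q) : ∃ K : ℝ, 0 < K ∧ ∀ (N : ℕ) (α : Fin N → ℝ),
    ∑ j, α j ^ 2 = 1 → ∫ t in (0:ℝ)..1, |radSum α t| ^ q ≤ K := by
  obtain ⟨k, hk⟩ := exists_nat_ge q
  have pt : ∀ x : ℝ, |x| ^ q ≤ (k.factorial + 1) * (Real.exp x + Real.exp (-x)) := by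
    intro x
    have h1 : (1 : ℝ) ≤ k.factorial := by exact_mod_cast k.factorial_pos
    have h2 : Real.exp |x| ≤ Real.exp x + Real.exp (-x) := by
      rcases abs_cases x with ⟨h, _⟩ | ⟨h, _⟩ <;> rw [h] <;>
        linarith [Real.exp_pos x, Real.exp_pos (-x)]
    have h3 : 1 ≤ Real.exp |x| := Real.one_le_exp (abs_nonneg x)
    have h4 : |x| ^ q ≤ 1 + |x| ^ k := by
      rcases le_total |x| 1 with h | h
      · have := Real.rpow_le_one (abs_nonneg x) h hq.le
        have : 0 ≤ |x| ^ k := by positivity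
        linarith
      · have := Real.rpow_le_rpow_of_exponent_le h hk
        rw [Real.rpow_natCast] at this
        linarith
    have h5 : |x| ^ k ≤ k.factorial * Real.exp |x| := by
      have := Real.pow_div_factorial_le_exp |x| (abs_nonneg x) k
      rw [div_le_iff₀ (by positivity)] at this
      linarith
    calc |x| ^ q ≤ (k.factorial + 1) * Real.exp |x| := by linarith
      _ ≤ _ := by gcongr
  refine ⟨(k.factorial + 1) * (Real.exp (1 / 2) + Real.exp (1 / 2)), by positivity, ?_⟩
  intro N α hα
  have c1 : Continuous fun x : ℝ => |x| ^ q := by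
    exact continuous_abs.rpow_const fun _ => Or.inr hq.le
  have I1 := radSum_intble α Real.continuous_exp 0 1
  have I2 := radSum_intble α (Real.continuous_exp.comp continuous_neg) 0 1
  simp only [Function.comp] at I2
  calc ∫ t in (0:ℝ)..1, |radSum α t| ^ q
      ≤ ∫ t in (0:ℝ)..1, (k.factorial + 1) * (Real.exp (radSum α t) + Real.exp (-radSum α t)) :=
        intervalIntegral.integral_mono_on (by norm_num) (radSum_intble α c1 0 1)
          ((I1.add I2).const_mul _) fun t _ => pt _
    _ = (k.factorial + 1) * ((∫ t in (0:ℝ)..1, Real.exp (radSum α t)) +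
          ∫ t in (0:ℝ)..1, Real.exp (radSum (fun j => -α j) t)) := by
        rw [intervalIntegral.integral_const_mul, intervalIntegral.integral_add I1 I2]
        simp [radSum]
    _ ≤ _ := by
        have a1 := radSum_exp α
        have a2 := radSum_exp fun j => -α j
        simp only [neg_sq, hα] at a1 a2
        gcongr

/-- A Rademacher sum with `ℓ²`-normalised coefficients has `L^q` moments bounded below,
by the pointwise inequality `x² ≤ D |x|^q + x⁴ / D` and the fourth-moment bound. -/
theorem radSum_lower {q : ℝ} (hq : 0 < q) (hq2 : q ≤ 2) : ∃ c : ℝ, 0 < c ∧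
    ∀ (N : ℕ) (α : Fin N → ℝ),
    ∑ j, α j ^ 2 = 1 → c ≤ ∫ t in (0:ℝ)..1, |radSum α t| ^ q := by
  obtain ⟨K, hK, hb⟩ := radSum_moment (q := 4) (by norm_num)
  set D : ℝ := 2 * K + 1
  have hD : 1 ≤ D := by simp only [D]; linarith
  have pt : ∀ x : ℝ, x ^ 2 ≤ D * |x| ^ q + |x| ^ (4 : ℝ) / D := by
    intro x
    have e4 : |x| ^ (4 : ℝ) = (x ^ 2) ^ 2 := by
      rw [show (4 : ℝ) = ((4 : ℕ) : ℝ) by norm_num, Real.rpow_natCast, ← pow_mul, ← abs_pow,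
        abs_of_nonneg (by positivity)]
    have n1 : 0 ≤ |x| ^ q := by positivity
    rcases le_total D (x ^ 2) with h | h
    · have : x ^ 2 ≤ |x| ^ (4 : ℝ) / D := by
        rw [e4, le_div_iff₀ (by linarith), sq (x ^ 2)]
        gcongr
      have : 0 ≤ D * |x| ^ q := by positivity
      linarith
    · have : x ^ 2 ≤ D * |x| ^ q := by
        rcases le_total |x| 1 with h1 | h1
        · rcases (abs_nonneg x).eq_or_lt with h0 | h0
          · have : x = 0 := abs_eq_zero.1 h0.symm
            simp [this, Real.zero_rpow hq.ne']
          · have := Real.rpow_le_rpow_of_exponent_ge h0 h1 hq2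
            rw [Real.rpow_two, sq_abs] at this
            nlinarith
        · have := Real.one_le_rpow h1 hq.le
          nlinarith
      have : 0 ≤ |x| ^ (4 : ℝ) / D := by positivity
      linarith
  refine ⟨1 / (2 * D), by positivity, ?_⟩
  intro N α hα
  have c1 : ∀ r : ℝ, 0 < r → Continuous fun x : ℝ => |x| ^ r := fun r hr => by
    exact continuous_abs.rpow_const fun _ => Or.inr hr.le
  have I1 := radSum_intble α (c1 q hq) 0 1
  have I2 := radSum_intble α (c1 4 (by norm_num)) 0 1
  have h1 : (1 : ℝ) ≤ D * (∫ t in (0:ℝ)..1, |radSum α t| ^ q) +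
      (∫ t in (0:ℝ)..1, |radSum α t| ^ (4 : ℝ)) / D := by
    have h0 := (radSum_lin_sq α).2
    rw [hα] at h0
    refine h0.symm.le.trans ?_
    rw [← intervalIntegral.integral_const_mul,
      ← intervalIntegral.integral_div, ← intervalIntegral.integral_add (I1.const_mul _) (I2.div_const _)]
    exact intervalIntegral.integral_mono_on (by norm_num) (radSum_intble α (continuous_pow 2) 0 1)
      ((I1.const_mul _).add (I2.div_const _)) fun t _ => pt _
  have h2 : (∫ t in (0:ℝ)..1, |radSum α t| ^ (4 : ℝ)) / D ≤ 1 / 2 := by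
    rw [div_le_iff₀ (by linarith)]
    refine (hb N α hα).trans ?_
    simp only [D]; linarith
  rw [div_le_iff₀ (by positivity)]
  linarith

/-- Homogeneity: either all coefficients vanish, or they can be normalised in `ℓ²`. -/
theorem radSum_scale {q : ℝ} (hq : 0 < q) {N : ℕ} (α : Fin N → ℝ) :
    ((∑ j, α j ^ 2) ^ (1 / 2 : ℝ) = 0 ∧
      (∫ t in (0:ℝ)..1, |∑ j, α j * rademacher j t| ^ q) ^ (1 / q) = 0) ∨
    ∃ β : Fin N → ℝ, ∑ j, β j ^ 2 = 1 ∧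
      (∫ t in (0:ℝ)..1, |∑ j, α j * rademacher j t| ^ q) ^ (1 / q) =
      (∑ j, α j ^ 2) ^ (1 / 2 : ℝ) * (∫ t in (0:ℝ)..1, |radSum β t| ^ q) ^ (1 / q) := by
  have hn : 0 ≤ ∑ j, α j ^ 2 := Finset.sum_nonneg fun j _ => sq_nonneg _
  rcases hn.eq_or_lt with h | h
  · left
    have : ∀ j, α j = 0 := fun j => by
      have := (Finset.sum_eq_zero_iff_of_nonneg fun j _ => sq_nonneg (α j)).1 h.symm j (Finset.mem_univ _)
      simpa using this
    have hq' : 1 / q ≠ 0 := by positivity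
    simp [this, Real.zero_rpow hq.ne', Real.zero_rpow (inv_ne_zero hq.ne')]
  · right
    set s := (∑ j, α j ^ 2) ^ (1 / 2 : ℝ) with hs
    have sp : 0 < s := Real.rpow_pos_of_pos h _
    have s2 : s ^ 2 = ∑ j, α j ^ 2 := by
      rw [hs, ← Real.rpow_natCast, ← Real.rpow_mul hn]; norm_num
    refine ⟨fun j => α j / s, ?_, ?_⟩
    · simp only [div_pow, ← Finset.sum_div]
      rw [s2, div_self h.ne']
    · have : ∀ t, |∑ j, α j * rademacher j t| ^ q = s ^ q * |radSum (fun j => α j / s) t| ^ q := by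
        intro t
        rw [← Real.mul_rpow sp.le (abs_nonneg _)]
        congr 1
        conv_rhs => rw [← abs_of_pos sp, ← abs_mul]
        congr 1
        rw [radSum, Finset.mul_sum, abs_of_pos sp]
        refine Finset.sum_congr rfl fun j _ => ?_
        field_simp
      simp only [this]
      rw [intervalIntegral.integral_const_mul, Real.mul_rpow (by positivity),
        ← Real.rpow_mul sp.le, mul_one_div_cancel hq.ne', Real.rpow_one]
      exact intervalIntegral.integral_nonneg (by norm_num) fun t _ => by positivity

theorem single_rad {q : ℝ} :
    (∫ t in (0:ℝ)..1, |∑ j : Fin 1, (1 : ℝ) * rademacher j t| ^ q) ^ (1 / q) = 1 := by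
  simp [rademacher_abs]

/-- A single Rademacher function shows that each admissible constant is at least `1`. The moment
bound is needed too, since the infimum of an empty set of reals is `0`. -/
theorem khintchineB_ge {q : ℝ} (hq : 0 < q) : 1 ≤ khintchineB q := by
  obtain ⟨K, hK, hb⟩ := radSum_moment hq
  refine le_csInf ⟨K ^ (1 / q), by positivity, ?_⟩ ?_
  · intro N α
    rcases radSum_scale hq α with ⟨h1, h2⟩ | ⟨β, h1, h2⟩
    · rw [h1, h2, mul_zero]
    · rw [h2, mul_comm]
      gcongr
      · exact intervalIntegral.integral_nonneg (by norm_num) fun t _ => by positivity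
      · exact hb N β h1
  · rintro B ⟨-, hB⟩
    have := hB 1 fun _ => 1
    rw [single_rad] at this
    simpa using this

/-- Positivity is what makes the division by `khintchineA p ^ 2` in `cc` meaningful. -/
theorem khintchineA_mem {q : ℝ} (hq : 0 < q) (hq2 : q ≤ 2) :
    0 < khintchineA q ∧ khintchineA q ≤ 1 := by
  have up : ∀ A ∈ {A : ℝ | 0 ≤ A ∧ ∀ (N : ℕ) (α : Fin N → ℝ),
    A * (∑ j, α j ^ 2) ^ (1/2 : ℝ) ≤
      (∫ t in (0:ℝ)..1, |∑ j, α j * rademacher j t| ^ q) ^ (1/q)}, A ≤ 1 := by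
    rintro A ⟨-, hA⟩
    have := hA 1 fun _ => 1
    rw [single_rad] at this
    simpa using this
  obtain ⟨c, hc, hb⟩ := radSum_lower hq hq2
  have hmem : c ^ (1 / q) ∈ {A : ℝ | 0 ≤ A ∧ ∀ (N : ℕ) (α : Fin N → ℝ),
    A * (∑ j, α j ^ 2) ^ (1/2 : ℝ) ≤
      (∫ t in (0:ℝ)..1, |∑ j, α j * rademacher j t| ^ q) ^ (1/q)} := by
    refine ⟨by positivity, fun N α => ?_⟩
    rcases radSum_scale hq α with ⟨h1, h2⟩ | ⟨β, h1, h2⟩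
    · rw [h1, h2, mul_zero]
    · rw [h2, mul_comm]
      gcongr
      exact hb N β h1
  exact ⟨(Real.rpow_pos_of_pos hc _).trans_le (le_csSup ⟨1, up⟩ hmem), csSup_le ⟨_, hmem⟩ up⟩

theorem one_le_cc {p p₁ p₂ : ℝ} (h1 : 1 ≤ p₁) (h2 : 1 ≤ p₂) (hp : 0 < p) : 1 ≤ cc p p₁ p₂ := by
  unfold cc
  split_ifs with h
  · obtain ⟨a, b⟩ := khintchineA_mem hp (by linarith)
    have b1 := khintchineB_ge (q := p₁) (by linarith)
    have b2 := khintchineB_ge (q := p₂) (by linarith)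
    rw [one_le_div (by positivity)]
    nlinarith
  · exact le_rfl

/-! ### Partial Fourier transforms and slices -/

theorem elim_eq (ι κ : Type) :
    (fun z : (ι → ℝ) × (κ → ℝ) => (Sum.elim z.1 z.2 : ι ⊕ κ → ℝ)) =
      (MeasurableEquiv.sumPiEquivProdPi (fun _ : ι ⊕ κ => ℝ)).symm := by
  ext z i
  cases i <;> rfl

theorem elim_mp (ι κ : Type) [Fintype ι] [Fintype κ] :
    MeasurePreserving (fun z : (ι → ℝ) × (κ → ℝ) => (Sum.elim z.1 z.2 : ι ⊕ κ → ℝ))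
      (volume.prod volume) volume := by
  rw [elim_eq]
  exact volume_measurePreserving_sumPiEquivProdPi_symm (fun _ : ι ⊕ κ => ℝ)

theorem elim_emb (ι κ : Type) [Fintype ι] [Fintype κ] :
    MeasurableEmbedding (fun z : (ι → ℝ) × (κ → ℝ) => (Sum.elim z.1 z.2 : ι ⊕ κ → ℝ)) := by
  rw [elim_eq]
  exact (MeasurableEquiv.sumPiEquivProdPi (fun _ : ι ⊕ κ => ℝ)).symm.measurableEmbedding

theorem elim_mp' (ι κ : Type) [Fintype ι] [Fintype κ] :
    MeasurePreserving (fun z : (κ → ℝ) × (ι → ℝ) => (Sum.elim z.2 z.1 : ι ⊕ κ → ℝ))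
      (volume.prod volume) volume :=
  (elim_mp ι κ).comp Measure.measurePreserving_swap

theorem elim_emb' (ι κ : Type) [Fintype ι] [Fintype κ] :
    MeasurableEmbedding (fun z : (κ → ℝ) × (ι → ℝ) => (Sum.elim z.2 z.1 : ι ⊕ κ → ℝ)) :=
  (elim_emb ι κ).comp MeasurableEquiv.prodComm.measurableEmbedding

/-- The partial inverse Fourier transform, in the second group of variables. -/
def pft {ι κ : Type} [Fintype κ] (h : (ι ⊕ κ → ℝ) → ℂ) (y : κ → ℝ) (ξ : ι → ℝ) : ℂ :=
  ∫ η : κ → ℝ, rch η y * h (Sum.elim ξ η)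

theorem pft_joint {ι κ : Type} [Fintype ι] [Fintype κ] {h : (ι ⊕ κ → ℝ) → ℂ}
    (hh : Integrable h) (y : κ → ℝ) :
    Integrable (fun z : (ι → ℝ) × (κ → ℝ) => rch z.2 y * h (Sum.elim z.1 z.2))
      (volume.prod volume) := by
  have := ((elim_mp ι κ).integrable_comp_emb (elim_emb ι κ)).2 hh
  refine this.bdd_mul (c := 1) ?_ (Eventually.of_forall fun z => (rch_norm _ _).le)
  exact (rch_cont.comp (continuous_snd.prodMk continuous_const)).aestronglyMeasurable

theorem pft_intble {ι κ : Type} [Fintype ι] [Fintype κ] {h : (ι ⊕ κ → ℝ) → ℂ}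
    (hh : Integrable h) (y : κ → ℝ) : Integrable (pft h y) :=
  (pft_joint hh y).integral_prod_left

/-- Fubini: integrating against a multiplier in the first group of frequencies and a character in
the second one only sees the partial inverse transform. -/
theorem pft_integral {ι κ : Type} [Fintype ι] [Fintype κ] {h : (ι ⊕ κ → ℝ) → ℂ}
    (hh : Integrable h) (y : κ → ℝ) {u : (ι → ℝ) → ℂ} (hu : Continuous u) {C : ℝ}
    (hC : ∀ ξ, ‖u ξ‖ ≤ C) :
    ∫ w, u (w ∘ Sum.inl) * (rch (w ∘ Sum.inr) y * h w) = ∫ ξ, u ξ * pft h y ξ := by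
  rw [← (elim_mp ι κ).integral_comp (elim_emb ι κ)]
  simp only [Sum.elim_comp_inl, Sum.elim_comp_inr]
  rw [integral_prod]
  · simp only [integral_const_mul, pft]
  · exact (pft_joint hh y).bdd_mul (c := C) (hu.comp continuous_fst).aestronglyMeasurable
      (Eventually.of_forall fun z => hC _)

theorem rch_split {ι κ : Type} [Fintype ι] [Fintype κ] (z : ι ⊕ κ → ℝ) (x : ι → ℝ)
    (y : κ → ℝ) : rch z (Sum.elim x y) = rch (z ∘ Sum.inl) x * rch (z ∘ Sum.inr) y := by
  conv_lhs => rw [← Sum.elim_comp_inl_inr z]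
  exact rch_elim _ _ _ _

/-- Almost every slice `f(·, y)` of a function with integrable Fourier transform has the same
property, and its Fourier transform is the partial inverse transform of `rft f`. -/
theorem slice_sl1 {ι κ : Type} [Fintype ι] [Fintype κ] {f : (ι ⊕ κ → ℝ) → ℂ} (hf : rSL1 f) :
    ∀ᵐ y : κ → ℝ, rSL1 (fun x : ι → ℝ => f (Sum.elim x y)) ∧
      rft (fun x : ι → ℝ => f (Sum.elim x y)) =ᵐ[volume] pft (rft f) y := by
  obtain ⟨h1, h2⟩ := hf
  have a1 := Measure.ae_ae_of_ae_prod ((elim_mp' ι κ).quasiMeasurePreserving.ae (rft_inv h1 h2))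
  have a2 := (((elim_mp' ι κ).integrable_comp_emb (elim_emb' ι κ)).2 h1).prod_right_ae
  filter_upwards [a1, a2] with y hy1 hy2
  have hy2 : Integrable fun x : ι → ℝ => f (Sum.elim x y) := hy2
  -- inversion in all variables exhibits the slice as an inverse transform in `ξ` alone
  have e : (fun x : ι → ℝ => f (Sum.elim x y)) =ᵐ[volume]
      fun x => ∫ ξ, rch ξ x * pft (rft f) y ξ := by
    filter_upwards [hy1] with x hx
    rw [hx, ← pft_integral h2 y (u := fun ξ => rch ξ x)
      (rch_cont.comp (continuous_id.prodMk continuous_const)) fun ξ => (rch_norm ξ x).le]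
    congr 1
    ext z
    rw [rch_split, mul_assoc]
  have e2 : rft (fun x : ι → ℝ => f (Sum.elim x y)) =ᵐ[volume] pft (rft f) y := by
    have : rft (fun x : ι → ℝ => f (Sum.elim x y)) =
        rft (fun x => ∫ ξ, rch ξ x * pft (rft f) y ξ) := by
      ext ξ
      refine integral_congr_ae ?_
      filter_upwards [e] with x hx
      rw [hx]
    rw [this]
    exact rft_inv' (pft_intble h2 y) (hy2.congr e)
  exact ⟨⟨hy2, (pft_intble h2 y).congr e2.symm⟩, e2⟩

/-- The lifted symbol ignores the frequencies dual to `y`, so integrating them out leaves the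
operator of `m` with the two transforms replaced by partial inverse transforms at height `y`. -/
theorem lift_apply {ι κ : Type} [Fintype ι] [Fintype κ] {m : (ι → ℝ) → (ι → ℝ) → ℂ}
    (hmc : Continuous fun z : (ι → ℝ) × (ι → ℝ) => m z.1 z.2)
    {Cm : ℝ} (hmB : ∀ ξ η, ‖m ξ η‖ ≤ Cm) {f g : (ι ⊕ κ → ℝ) → ℂ}
    (hf : rSL1 f) (hg : rSL1 g) (x : ι → ℝ) (y : κ → ℝ) :
    rBm (fun z w => m (z ∘ Sum.inl) (w ∘ Sum.inl)) f g (Sum.elim x y) =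
      ∫ ξ, ∫ η, pft (rft f) y ξ * pft (rft g) y η * m ξ η * rch (ξ + η) x := by
  have rc : Continuous fun ξ : ι → ℝ => rch ξ x :=
    rch_cont.comp (continuous_id.prodMk continuous_const)
  have nb : ∀ ξ η, ‖m ξ η * rch η x‖ ≤ Cm := fun ξ η => by
    rw [norm_mul, rch_norm, mul_one]; exact hmB _ _
  -- the inner integral, as a function of the first group of frequencies
  set v : (ι → ℝ) → ℂ := fun ξ => rch ξ x * ∫ η, (m ξ η * rch η x) * pft (rft g) y η with hv
  have vc : Continuous v := by
    refine rc.mul (continuous_of_dominated (bound := fun η => Cm * ‖pft (rft g) y η‖) ?_ ?_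
      ((pft_intble hg.2 y).norm.const_mul _) ?_)
    · intro ξ
      exact ((hmc.comp (Continuous.prodMk_right ξ)).mul rc).aestronglyMeasurable.mul
        (pft_intble hg.2 y).1
    · intro ξ
      refine Eventually.of_forall fun η => ?_
      rw [norm_mul]
      exact mul_le_mul_of_nonneg_right (nb ξ η) (norm_nonneg _)
    · refine Eventually.of_forall fun η => ?_
      exact ((hmc.comp (Continuous.prodMk_left η)).mul continuous_const).mul continuous_const
  have vb : ∀ ξ, ‖v ξ‖ ≤ ∫ η, Cm * ‖pft (rft g) y η‖ := fun ξ => by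
    rw [hv, norm_mul, rch_norm, one_mul]
    refine norm_integral_le_of_norm_le ((pft_intble hg.2 y).norm.const_mul _) ?_
    refine Eventually.of_forall fun η => ?_
    rw [norm_mul]
    exact mul_le_mul_of_nonneg_right (nb ξ η) (norm_nonneg _)
  calc rBm (fun z w => m (z ∘ Sum.inl) (w ∘ Sum.inl)) f g (Sum.elim x y)
      = ∫ z, v (z ∘ Sum.inl) * (rch (z ∘ Sum.inr) y * rft f z) := by
        unfold rBm
        congr 1
        ext z
        have := pft_integral hg.2 y (u := fun η => m (z ∘ Sum.inl) η * rch η x)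
          ((hmc.comp (Continuous.prodMk_right (z ∘ Sum.inl))).mul rc) (nb (z ∘ Sum.inl))
        simp only [hv]
        rw [← this, ← integral_const_mul, ← integral_mul_const]
        congr 1
        ext w
        rw [rch_add, rch_split, rch_split]
        ring
    _ = ∫ ξ, v ξ * pft (rft f) y ξ := pft_integral hf.2 y vc vb
    _ = _ := by
        congr 1
        ext ξ
        simp only [hv]
        rw [← integral_const_mul, ← integral_mul_const]
        congr 1
        ext η
        rw [rch_add]
        ring

/-- The lifted operator acts on almost every slice as the original operator. -/
theorem lift_slice {ι κ : Type} [Fintype ι] [Fintype κ] {m : (ι → ℝ) → (ι → ℝ) → ℂ}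
    (hmc : Continuous fun z : (ι → ℝ) × (ι → ℝ) => m z.1 z.2)
    {Cm : ℝ} (hmB : ∀ ξ η, ‖m ξ η‖ ≤ Cm) {f g : (ι ⊕ κ → ℝ) → ℂ}
    (hf : rSL1 f) (hg : rSL1 g) {y : κ → ℝ}
    (hfy : rft (fun x : ι → ℝ => f (Sum.elim x y)) =ᵐ[volume] pft (rft f) y)
    (hgy : rft (fun x : ι → ℝ => g (Sum.elim x y)) =ᵐ[volume] pft (rft g) y) (x : ι → ℝ) :
    rBm (fun z w => m (z ∘ Sum.inl) (w ∘ Sum.inl)) f g (Sum.elim x y) =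
      rBm m (fun x : ι → ℝ => f (Sum.elim x y)) (fun x : ι → ℝ => g (Sum.elim x y)) x := by
  rw [lift_apply hmc hmB hf hg]
  refine integral_congr_ae ?_
  filter_upwards [hfy] with ξ hξ
  refine integral_congr_ae ?_
  filter_upwards [hgy] with η hη
  rw [hξ, hη]

theorem eLpNorm_ofReal {α : Type*} [MeasurableSpace α] (μ : Measure α) {q : ℝ} (hq : 0 < q)
    (h : α → ℂ) :
    eLpNorm h (ENNReal.ofReal q) μ = (∫⁻ x, ‖h x‖ₑ ^ q ∂μ) ^ (1 / q) := by
  rw [eLpNorm_eq_lintegral_rpow_enorm_toReal (by simpa using hq) ENNReal.ofReal_ne_top,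
    ENNReal.toReal_ofReal hq.le]

/-- Every admissible constant for `m` is admissible for its lift: apply the bound on slices
and integrate in the remaining variable with Hölder's inequality, which holds for all `p > 0`. -/
theorem lift_mem {ι κ : Type} [Fintype ι] [Fintype κ] {p p₁ p₂ : ℝ} (h1 : 0 < p₁) (h2 : 0 < p₂)
    (hp : 0 < p) (hrel : 1 / p₁ + 1 / p₂ = 1 / p) {m : (ι → ℝ) → (ι → ℝ) → ℂ}
    (hmc : Continuous fun z : (ι → ℝ) × (ι → ℝ) => m z.1 z.2)
    {Cm : ℝ} (hmB : ∀ ξ η, ‖m ξ η‖ ≤ Cm) {C : ℝ≥0∞} (hCt : C ≠ ⊤)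
    (hC : ∀ f g : (ι → ℝ) → ℂ, rSL1 f → rSL1 g →
      eLpNorm (rBm m f g) (ENNReal.ofReal p) volume ≤
      C * eLpNorm f (ENNReal.ofReal p₁) volume * eLpNorm g (ENNReal.ofReal p₂) volume)
    (f g : (ι ⊕ κ → ℝ) → ℂ) (hf : rSL1 f) (hg : rSL1 g) :
    eLpNorm (rBm (fun z w => m (z ∘ Sum.inl) (w ∘ Sum.inl)) f g) (ENNReal.ofReal p) volume ≤
      C * eLpNorm f (ENNReal.ofReal p₁) volume * eLpNorm g (ENNReal.ofReal p₂) volume := by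
  set B := rBm (fun z w => m (z ∘ Sum.inl) (w ∘ Sum.inl)) f g with hB
  have am : ∀ (h : (ι ⊕ κ → ℝ) → ℂ) (q : ℝ), Integrable h →
      AEMeasurable (fun z : (κ → ℝ) × (ι → ℝ) => ‖h (Sum.elim z.2 z.1)‖ₑ ^ q)
        (volume.prod volume) := fun h q hh =>
    ((((elim_mp' ι κ).integrable_comp_emb (elim_emb' ι κ)).2 hh).1.enorm).pow_const q
  have split : ∀ (h : (ι ⊕ κ → ℝ) → ℂ) (q : ℝ), Integrable h →
      ∫⁻ z, ‖h z‖ₑ ^ q = ∫⁻ y : κ → ℝ, ∫⁻ x : ι → ℝ, ‖h (Sum.elim x y)‖ₑ ^ q := by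
    intro h q hh
    rw [← (elim_mp' ι κ).lintegral_comp_emb (elim_emb' ι κ), lintegral_prod _ (am h q hh)]
  set a : (κ → ℝ) → ℝ≥0∞ := fun y => ∫⁻ x : ι → ℝ, ‖f (Sum.elim x y)‖ₑ ^ p₁ with ha
  set b : (κ → ℝ) → ℝ≥0∞ := fun y => ∫⁻ x : ι → ℝ, ‖g (Sum.elim x y)‖ₑ ^ p₂ with hb
  have ma : AEMeasurable a := (am f p₁ hf.1).lintegral_prod_right'
  have mb : AEMeasurable b := (am g p₂ hg.1).lintegral_prod_right'
  have hsum : p / p₁ + p / p₂ = 1 := by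
    have : p * (1 / p₁ + 1 / p₂) = 1 := by rw [hrel]; field_simp
    rw [← this]; ring
  have key : ∫⁻ z, ‖B z‖ₑ ^ p ≤
      C ^ p * ((∫⁻ z, ‖f z‖ₑ ^ p₁) ^ (p / p₁) * (∫⁻ z, ‖g z‖ₑ ^ p₂) ^ (p / p₂)) := by
    rw [split f p₁ hf.1, split g p₂ hg.1]
    calc ∫⁻ z, ‖B z‖ₑ ^ p
        = ∫⁻ z : (κ → ℝ) × (ι → ℝ), ‖B (Sum.elim z.2 z.1)‖ₑ ^ p ∂(volume.prod volume) :=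
          ((elim_mp' ι κ).lintegral_comp_emb (elim_emb' ι κ) _).symm
      -- this direction of Tonelli needs no measurability of `B`
      _ ≤ ∫⁻ y : κ → ℝ, ∫⁻ x : ι → ℝ, ‖B (Sum.elim x y)‖ₑ ^ p := lintegral_prod_le _
      _ ≤ ∫⁻ y : κ → ℝ, C ^ p * (a y ^ (p / p₁) * b y ^ (p / p₂)) := by
          refine lintegral_mono_ae ?_
          filter_upwards [slice_sl1 hf, slice_sl1 hg] with y ⟨f1, f2⟩ ⟨g1, g2⟩
          have := hC _ _ f1 g1
          rw [eLpNorm_ofReal _ hp, eLpNorm_ofReal _ h1, eLpNorm_ofReal _ h2] at this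
          simp only [← lift_slice hmc hmB hf hg f2 g2] at this
          have := ENNReal.rpow_le_rpow this hp.le
          rw [← ENNReal.rpow_mul, one_div_mul_cancel hp.ne', ENNReal.rpow_one,
            ENNReal.mul_rpow_of_nonneg _ _ hp.le, ENNReal.mul_rpow_of_nonneg _ _ hp.le,
            ← ENNReal.rpow_mul, ← ENNReal.rpow_mul, one_div_mul_eq_div, one_div_mul_eq_div,
            mul_assoc] at this
          exact this
      _ = C ^ p * ∫⁻ y : κ → ℝ, a y ^ (p / p₁) * b y ^ (p / p₂) :=
          lintegral_const_mul' _ _ (ENNReal.rpow_ne_top_of_nonneg hp.le hCt)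
      _ ≤ _ := by
          gcongr
          exact ENNReal.lintegral_mul_norm_pow_le ma mb (by positivity) (by positivity) hsum
  rw [eLpNorm_ofReal _ hp, eLpNorm_ofReal _ h1, eLpNorm_ofReal _ h2]
  refine (ENNReal.rpow_le_rpow key (by positivity : 0 ≤ 1 / p)).trans_eq ?_
  have hp' : 0 ≤ 1 / p := by positivity
  rw [ENNReal.mul_rpow_of_nonneg _ _ hp', ENNReal.mul_rpow_of_nonneg _ _ hp',
    ← ENNReal.rpow_mul, ← ENNReal.rpow_mul, ← ENNReal.rpow_mul, mul_one_div_cancel hp.ne',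
    ENNReal.rpow_one, ← mul_assoc]
  have e : ∀ r : ℝ, p / r * (1 / p) = 1 / r := fun r => by field_simp
  rw [e, e]

/-! ### The lifting theorem -/

theorem stmt9 (n k : ℕ) (hn : 1 ≤ n) (hk : 1 ≤ k)
    (p p₁ p₂ : ℝ) (h1 : 1 ≤ p₁) (h2 : 1 ≤ p₂) (hp : 0 < p)
    (hrel : 1/p₁ + 1/p₂ = 1/p)
    -- `m ∈ C_b(ℝ^{2n})`, lifted to `ℝ^d` with `d = n + k`
    (m : (Fin n → ℝ) → (Fin n → ℝ) → ℂ)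
    (hmc : Continuous fun z : ((Fin n → ℝ) × (Fin n → ℝ)) => m z.1 z.2)
    (Cm : ℝ) (hmB : ∀ ξ η, ‖m ξ η‖ ≤ Cm)
    (hm : rBMnorm (Fin n) p₁ p₂ p m ≠ ⊤) :
    rBMnorm (Fin n ⊕ Fin k) p₁ p₂ p
        (fun z w => m (z ∘ Sum.inl) (w ∘ Sum.inl)) ≤
      ENNReal.ofReal (cc p p₁ p₂) * rBMnorm (Fin n) p₁ p₂ p m := by
  clear hm
  have hle : rBMnorm (Fin n ⊕ Fin k) p₁ p₂ p
      (fun z w => m (z ∘ Sum.inl) (w ∘ Sum.inl)) ≤ rBMnorm (Fin n) p₁ p₂ p m := by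
    refine le_sInf fun C hC => ?_
    rcases eq_or_ne C ⊤ with rfl | hCt
    · exact le_top
    · exact sInf_le fun f g hf hg =>
        lift_mem (by linarith) (by linarith) hp hrel hmc hmB hCt hC f g hf hg
  refine hle.trans (le_mul_of_one_le_left' ?_)
  rw [← ENNReal.ofReal_one]
  exact ENNReal.ofReal_le_ofReal (one_le_cc h1 h2 hp)
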